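/- arXiv:2307.13543 — 4 statements merged into one kernel-verified Lean document; each statement's English description precedes it below -/
import Mathlib

section
/- Let Z ⊆ Σ^ℤ be a sofic shift, n ∈ ℕ, and f : ℝ^n × Z → ℝ^n. The system x(k+1) = f(x(k), σ^k(z)) is globally uniformly asymptotically stable (GUAS) if and only if it admits a sequence-dependent Lyapunov function, i.e. a function V : ℝ^n × Z → ℝ, functions α₁, α₂ of class K∞ and a constant γ ∈ [0,1) such that α₁(|x|) ≤ V(x, z) ≤ α₂(|x|) for all x ∈ ℝ^n and z ∈ Z, and V(f(x,z), σ(z)) ≤ γ V(x, z) for all x ∈ ℝ^n and z ∈ Z. -/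
open Set Filter Matrix

section Defs

variable {A : Type*}

/-- The shift map on bi-infinite sequences over the alphabet `A`. -/
def shiftMap (z : ℤ → A) : ℤ → A := fun k => z (k + 1)

/-- `s` is a bi-infinite walk, labeled by `z`, in the labeled graph with edge set `E`. -/
def IsLabeledWalk {S : Type*} (E : Set (S × S × A)) (z : ℤ → A) (s : ℤ → S) : Prop :=
  ∀ k : ℤ, (s k, s (k + 1), z k) ∈ E

/-- `Z(G)`: the set of labels of bi-infinite walks of the graph with edge set `E`. -/
def graphLang {S : Type*} (E : Set (S × S × A)) : Set (ℤ → A) :=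
  {z | ∃ s : ℤ → S, IsLabeledWalk E z s}

/-- `Z(G, s₀)`: the set of labels of bi-infinite walks starting (at time `0`) at node `s₀`. -/
def graphLangAt {S : Type*} (E : Set (S × S × A)) (s0 : S) : Set (ℤ → A) :=
  {z | ∃ s : ℤ → S, IsLabeledWalk E z s ∧ s 0 = s0}

/-- A set `Z` of bi-infinite sequences is a sofic shift if it is the set of labels of
bi-infinite walks of some finite labeled graph. -/
def IsSofic (Z : Set (ℤ → A)) : Prop :=
  ∃ (S : Type) (_ : Fintype S) (E : Set (S × S × A)), Z = graphLang E

/-- The graph with node set `Fin K` and edge set `E` is a presentation of the indexed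
covering `C` of `Z`: `Z = Z(G)` and `C j = Z(G, j)` for every node `j`. -/
def IsPresentation {K : ℕ} (E : Set (Fin K × Fin K × A)) (C : Fin K → Set (ℤ → A))
    (Z : Set (ℤ → A)) : Prop :=
  Z = graphLang E ∧ ∀ j : Fin K, C j = graphLangAt E j

/-- `C` is a graph-induced covering of `Z`. -/
def IsGCovering {K : ℕ} (C : Fin K → Set (ℤ → A)) (Z : Set (ℤ → A)) : Prop :=
  ∃ E : Set (Fin K × Fin K × A), IsPresentation E C Z

/-- The forward one-sided sequence `z⁺ = (z 0, z 1, …)`. -/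
def postSeq (z : ℤ → A) : ℕ → A := fun m => z m

/-- The backward one-sided sequence `z⁻ = (…, z (-2), z (-1))`, encoded so that index
`m` holds `z (-(m+1))` (index `0` is `z (-1)`). -/
def preSeq (z : ℤ → A) : ℕ → A := fun m => z (-(m + 1))

/-- Concatenation of a letter with a set of one-sided sequences: for forward sequences this
is `i · B`; for backward sequences (with the encoding of `preSeq`) this is `B · i`. -/
def consSeq (i : A) (B : Set (ℕ → A)) : Set (ℕ → A) :=
  {w | w 0 = i ∧ (fun m => w (m + 1)) ∈ B}

/-- Time inversion of a bi-infinite sequence: `z⁻¹ k = z (-1-k)`. -/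
def timeInv (z : ℤ → A) : ℤ → A := fun k => z (-1 - k)

/-- The transpose graph: edges are reversed, labels kept. -/
def transposeE {S : Type*} (E : Set (S × S × A)) : Set (S × S × A) :=
  {p | (p.2.1, p.1, p.2.2) ∈ E}

/-- Class `K∞` functions. -/
def IsKInf (α : ℝ → ℝ) : Prop :=
  ContinuousOn α (Set.Ici 0) ∧ StrictMonoOn α (Set.Ici 0) ∧ α 0 = 0 ∧
    Tendsto α atTop atTop

/-- Class `KL` functions. -/
def IsKL (β : ℝ → ℝ → ℝ) : Prop :=
  ContinuousOn (fun p : ℝ × ℝ => β p.1 p.2) (Set.Ici 0 ×ˢ Set.Ici 0) ∧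
  (∀ s, 0 ≤ s → ContinuousOn (fun r => β r s) (Set.Ici 0) ∧
      StrictMonoOn (fun r => β r s) (Set.Ici 0) ∧ β 0 s = 0) ∧
  (∀ r, 0 ≤ r → AntitoneOn (fun s => β r s) (Set.Ici 0) ∧
      Tendsto (fun s => β r s) atTop (nhds 0))

/-- The solution map `Φ(k, x₀, z)` of the system `x(k+1) = f(x(k), σ^k z)`. -/
def sol {n : ℕ} (f : (Fin n → ℝ) → (ℤ → A) → Fin n → ℝ) (x0 : Fin n → ℝ) (z : ℤ → A) :
    ℕ → Fin n → ℝ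
  | 0 => x0
  | k + 1 => f (sol f x0 z k) (shiftMap^[k] z)

end Defs


/-- Sofic shifts are shift-invariant. -/
theorem sofic_shift {A : Type*} {Z : Set (ℤ → A)} (hZ : IsSofic Z) {z : ℤ → A} (hz : z ∈ Z) :
    shiftMap z ∈ Z := by
  obtain ⟨S, _, E, rfl⟩ := hZ
  obtain ⟨s, hs⟩ := hz
  exact ⟨fun k => s (k + 1), fun k => hs (k + 1)⟩

theorem sofic_shift_iter {A : Type*} {Z : Set (ℤ → A)} (hZ : IsSofic Z) {z : ℤ → A} (hz : z ∈ Z)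
    (k : ℕ) : shiftMap^[k] z ∈ Z := by
  induction k with
  | zero => exact hz
  | succ k ih => rw [Function.iterate_succ_apply']; exact sofic_shift hZ ih

theorem sol_succ_shift {A : Type*} {n : ℕ} (f : (Fin n → ℝ) → (ℤ → A) → Fin n → ℝ)
    (x : Fin n → ℝ) (z : ℤ → A) (k : ℕ) :
    sol f (f x z) (shiftMap z) k = sol f x z (k + 1) := by
  induction k with
  | zero => rfl
  | succ k ih =>
    change f (sol f (f x z) (shiftMap z) k) (shiftMap^[k] (shiftMap z)) =
      f (sol f x z (k + 1)) (shiftMap^[k + 1] z)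
    rw [ih, Function.iterate_succ_apply]

/-- A class `K∞` function extends to an order isomorphism of the line. -/
theorem kinf_orderIso {α : ℝ → ℝ} (h : IsKInf α) :
    ∃ e : ℝ ≃o ℝ, ∀ x, 0 ≤ x → e x = α x := by
  obtain ⟨hc, hm, h0, ht⟩ := h
  let a : ℝ → ℝ := fun x => α (max x 0) + min x 0
  have hac : Continuous a := by
    have h1 : Continuous (fun x : ℝ => α (max x 0)) :=
      hc.comp_continuous (by fun_prop) (fun x => Set.mem_Ici.2 (le_max_right x 0))
    exact h1.add (by fun_prop)
  have ham : StrictMono a := by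
    intro x y hxy
    have h1 : α (max x 0) ≤ α (max y 0) :=
      hm.monotoneOn (le_max_right _ _ : (0:ℝ) ≤ _) (le_max_right _ _ : (0:ℝ) ≤ _)
        (max_le_max_right 0 hxy.le)
    have h2 : min x 0 ≤ min y 0 := min_le_min_right 0 hxy.le
    change α (max x 0) + min x 0 < α (max y 0) + min y 0
    rcases lt_or_ge x 0 with hx | hx
    · have : min x 0 < min y 0 := by
        rw [min_eq_left hx.le]; exact lt_min hxy hx
      linarith
    · have : α (max x 0) < α (max y 0) := by
        rw [max_eq_left hx, max_eq_left (hx.trans hxy.le)]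
        exact hm hx (hx.trans hxy.le) hxy
      linarith
  have hpos : ∀ x, 0 ≤ x → a x = α x := by
    intro x hx
    simp [a, hx]
  have hneg : ∀ x, x ≤ 0 → a x = x := by
    intro x hx
    simp [a, hx, h0]
  have has : Function.Surjective a := by
    refine hac.surjective ?_ ?_
    · refine ht.congr' ?_
      filter_upwards [eventually_ge_atTop 0] with x hx using (hpos x hx).symm
    · refine tendsto_id.congr' ?_
      filter_upwards [eventually_le_atBot 0] with x hx using (hneg x hx).symm
  exact ⟨StrictMono.orderIsoOfSurjective a ham has, fun x hx => hpos x hx⟩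

theorem kinf_nonneg {α : ℝ → ℝ} (h : IsKInf α) {x : ℝ} (hx : 0 ≤ x) : 0 ≤ α x := by
  rw [← h.2.2.1]
  exact h.2.1.monotoneOn (le_refl (0:ℝ)) hx hx

/-- Sufficiency: the comparison function built from a Lyapunov function. -/
theorem exists_kl_of_kinf {α₁ α₂ : ℝ → ℝ} {γ : ℝ} (h1 : IsKInf α₁) (h2 : IsKInf α₂)
    (hγ : 0 < γ) (hγ1 : γ < 1) :
    ∃ β : ℝ → ℝ → ℝ, IsKL β ∧ ∀ (k : ℕ) (r t : ℝ), 0 ≤ r → 0 ≤ t →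
      α₁ t ≤ γ ^ k * α₂ r → t ≤ β r k := by
  obtain ⟨e, he⟩ := kinf_orderIso h1
  have he0 : e.symm 0 = 0 := by
    rw [OrderIso.symm_apply_eq, he 0 le_rfl, h1.2.2.1]
  have hec : Continuous e.symm := e.symm.continuous
  have hg : Continuous fun s : ℝ => γ ^ s := Real.continuous_const_rpow hγ.ne'
  refine ⟨fun r s => e.symm (γ ^ s * α₂ r), ⟨?_, ?_, ?_⟩, ?_⟩
  · refine hec.comp_continuousOn ?_
    refine (hg.comp continuous_snd).continuousOn.mul ?_
    exact h2.1.comp continuous_fst.continuousOn (fun p hp => hp.1)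
  · intro s hs
    refine ⟨hec.comp_continuousOn (continuousOn_const.mul h2.1), ?_, ?_⟩
    · intro r hr r' hr' hrr
      exact e.symm.strictMono (mul_lt_mul_of_pos_left (h2.2.1 hr hr' hrr)
        (Real.rpow_pos_of_pos hγ s))
    · simp [h2.2.2.1, he0]
  · intro r hr
    refine ⟨?_, ?_⟩
    · intro s hs s' hs' hss
      refine e.symm.monotone (mul_le_mul_of_nonneg_right ?_ (kinf_nonneg h2 hr))
      exact Real.rpow_le_rpow_of_exponent_ge hγ hγ1.le hss
    · have h3 : Tendsto (fun s : ℝ => γ ^ s * α₂ r) atTop (nhds 0) := by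
        have := (tendsto_rpow_atTop_of_base_lt_one γ (by linarith) hγ1).mul_const (α₂ r)
        simpa using this
      have := (hec.tendsto 0).comp h3
      rw [he0] at this
      exact this
  · intro k r t hr ht h
    change t ≤ e.symm (γ ^ (k:ℝ) * α₂ r)
    rw [OrderIso.le_symm_apply, he t ht, Real.rpow_natCast]
    exact h

/-- The elementary ramp functions. -/
noncomputable def ramp (j : ℕ) (s : ℝ) : ℝ := max 0 (s - 1 / ((j : ℝ) + 1))

theorem ramp_nonneg (j : ℕ) (s : ℝ) : 0 ≤ ramp j s := le_max_left _ _

theorem ramp_mono (j : ℕ) : Monotone (ramp j) := fun s t h =>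
  max_le_max_left 0 (by linarith)

theorem ramp_le_abs (j : ℕ) (s : ℝ) : ramp j s ≤ |s| := by
  have : 0 < 1 / ((j : ℝ) + 1) := by positivity
  exact max_le (abs_nonneg s) (by linarith [le_abs_self s])

theorem ramp_continuous (j : ℕ) : Continuous (ramp j) := by
  unfold ramp; fun_prop

theorem ramp_zero (j : ℕ) : ramp j 0 = 0 := by
  have : 0 < 1 / ((j : ℝ) + 1) := by positivity
  unfold ramp
  exact max_eq_left (by linarith)

/-- A weighted sum of ramps with positive summable weights is of class `K∞`. -/
theorem kinf_ramp_sum {c : ℕ → ℝ} (hc : ∀ j, 0 < c j) (hs : Summable c) :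
    (∀ s, Summable fun j => c j * ramp j s) ∧ IsKInf (fun s => ∑' j, c j * ramp j s) := by
  have hsum : ∀ s, Summable fun j => c j * ramp j s := fun s =>
    Summable.of_nonneg_of_le (fun j => mul_nonneg (hc j).le (ramp_nonneg j s))
      (fun j => mul_le_mul_of_nonneg_left (ramp_le_abs j s) (hc j).le) (hs.mul_right |s|)
  refine ⟨hsum, ?_, ?_, ?_, ?_⟩
  · intro s₀ hs₀
    have hco : ContinuousOn (fun s => ∑' j, c j * ramp j s) (Set.Ioo (s₀ - 1) (s₀ + 1)) := by
      refine continuousOn_tsum (u := fun j => c j * (|s₀| + 1))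
        (fun j => (continuous_const.mul (ramp_continuous j)).continuousOn) (hs.mul_right _) ?_
      intro j s hs
      rw [Real.norm_of_nonneg (mul_nonneg (hc j).le (ramp_nonneg j s))]
      refine mul_le_mul_of_nonneg_left ((ramp_le_abs j s).trans ?_) (hc j).le
      rw [abs_le]
      have h1 := le_abs_self s₀
      have h2 := neg_abs_le s₀
      constructor <;> linarith [hs.1, hs.2]
    exact (hco.continuousAt (Ioo_mem_nhds (by linarith) (by linarith))).continuousWithinAt
  · intro s h0 t _ hst
    have h0' : 0 ≤ s := h0
    obtain ⟨j, hj⟩ := exists_nat_one_div_lt (lt_of_le_of_lt h0' hst)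
    refine Summable.tsum_lt_tsum (i := j)
      (fun i => mul_le_mul_of_nonneg_left (ramp_mono i hst.le) (hc i).le) ?_ (hsum s) (hsum t)
    refine mul_lt_mul_of_pos_left ?_ (hc j)
    refine max_lt ?_ ?_
    · exact lt_max_of_lt_right (by linarith)
    · exact lt_max_of_lt_right (by linarith)
  · simp [ramp_zero]
  · have h1 : Tendsto (fun s : ℝ => c 0 * (s - 1)) atTop atTop :=
      Tendsto.const_mul_atTop (hc 0) (tendsto_atTop_add_const_right _ (-1) tendsto_id)
    refine tendsto_atTop_mono (fun s => ?_) h1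
    have h2 : c 0 * ramp 0 s ≤ ∑' j, c j * ramp j s :=
      (hsum s).le_tsum 0 (fun j _ => mul_nonneg (hc j).le (ramp_nonneg j s))
    refine le_trans (mul_le_mul_of_nonneg_left ?_ (hc 0).le) h2
    unfold ramp
    simp

/-- A version of Sontag's lemma on `KL` functions. -/
theorem sontag {β : ℝ → ℝ → ℝ} (hβ : IsKL β) :
    ∃ α : ℝ → ℝ, IsKInf α ∧ ∀ N : ℕ, Summable fun k : ℕ => 2 ^ k * α (β N k) := by
  obtain ⟨-, hr, hs⟩ := hβ
  have hfin : ∀ N j : ℕ, Summable fun k : ℕ => (2:ℝ) ^ k * ramp j (β N k) := by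
    intro N j
    have ht : Tendsto (fun k : ℕ => β N k) atTop (nhds 0) :=
      (hs N (Nat.cast_nonneg N)).2.comp tendsto_natCast_atTop_atTop
    have hj : (0:ℝ) < 1 / ((j : ℝ) + 1) := by positivity
    obtain ⟨K, hK⟩ := eventually_atTop.1 (ht.eventually (gt_mem_nhds hj))
    refine summable_of_ne_finset_zero (s := Finset.range K) ?_
    intro k hk
    have h1 := hK k (by simpa using hk)
    have : ramp j (β N k) = 0 := max_eq_left (by linarith)
    simp [this]
  let D : ℕ → ℕ → ℝ := fun N j => ∑' k : ℕ, (2:ℝ) ^ k * ramp j (β N k)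
  have hD0 : ∀ N j, 0 ≤ D N j := fun N j =>
    tsum_nonneg (fun k => mul_nonneg (by positivity) (ramp_nonneg _ _))
  have hDm : ∀ N j, N ≤ j → D N j ≤ D j j := by
    intro N j h
    refine (hfin N j).tsum_le_tsum (fun k => ?_) (hfin j j)
    refine mul_le_mul_of_nonneg_left (ramp_mono j ?_) (by positivity)
    exact (hr k (Nat.cast_nonneg k)).2.1.monotoneOn (Nat.cast_nonneg N : (0:ℝ) ≤ N)
      (Nat.cast_nonneg j : (0:ℝ) ≤ j) (by exact_mod_cast h)
  let c : ℕ → ℝ := fun j => (1/2) ^ j / (1 + D j j)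
  have hcpos : ∀ j, 0 < c j := fun j => div_pos (by positivity) (by linarith [hD0 j j])
  have hgeo : Summable fun j : ℕ => ((1:ℝ)/2) ^ j :=
    summable_geometric_of_lt_one (by norm_num) (by norm_num)
  have hcs : Summable c := by
    refine Summable.of_nonneg_of_le (fun j => (hcpos j).le) (fun j => ?_) hgeo
    exact div_le_self (by positivity) (by linarith [hD0 j j])
  obtain ⟨hsum, hk⟩ := kinf_ramp_sum hcpos hcs
  refine ⟨_, hk, fun N => ?_⟩
  have hgeoN : Summable fun j : ℕ => ((1:ℝ)/2) ^ (j + N) := (summable_nat_add_iff N).2 hgeo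
  have hcD : Summable fun j => c j * D N j := by
    rw [← summable_nat_add_iff N]
    refine Summable.of_nonneg_of_le (fun j => mul_nonneg (hcpos _).le (hD0 _ _)) (fun j => ?_)
      hgeoN
    have h1 := hDm N (j + N) (by omega)
    have h2 := hD0 (j + N) (j + N)
    have h3 : (0:ℝ) < (1/2) ^ (j + N) := by positivity
    change (1/2) ^ (j + N) / (1 + D (j + N) (j + N)) * D N (j + N) ≤ _
    rw [div_mul_eq_mul_div, div_le_iff₀ (by linarith)]
    exact mul_le_mul_of_nonneg_left (by linarith) h3.le
  have hprod : Summable fun p : ℕ × ℕ => c p.1 * ((2:ℝ) ^ p.2 * ramp p.1 (β N p.2)) := by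
    have hin : ∀ j : ℕ, Summable fun k : ℕ => c j * ((2:ℝ) ^ k * ramp j (β N k)) :=
      fun j => Summable.mul_left (c j) (hfin N j)
    rw [summable_prod_of_nonneg]
    · refine ⟨hin, ?_⟩
      simp only [tsum_mul_left]
      exact hcD
    · intro p
      exact mul_nonneg (hcpos _).le (mul_nonneg (by positivity) (ramp_nonneg _ _))
  have h5 := hprod.prod_symm.prod
  refine h5.congr (fun k => ?_)
  rw [← tsum_mul_left]
  refine tsum_congr (fun j => ?_)
  simp only [Prod.swap]
  ring

/-- Necessity: comparison functions for the converse result. -/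
theorem converse_comparison {β : ℝ → ℝ → ℝ} (hβ : IsKL β) :
    ∃ α₁ α₂ : ℝ → ℝ, IsKInf α₁ ∧ IsKInf α₂ ∧
      (∀ r, 0 ≤ r → Summable fun k : ℕ => 2 ^ k * α₁ (β r k)) ∧
      (∀ r, 0 ≤ r → ∑' k : ℕ, 2 ^ k * α₁ (β r k) ≤ α₂ r) := by
  obtain ⟨α, hα, hN⟩ := sontag hβ
  have hb0 : ∀ (r : ℝ) (k : ℕ), 0 ≤ r → 0 ≤ β r k := by
    intro r k h
    obtain ⟨-, hm, h0⟩ := hβ.2.1 k (Nat.cast_nonneg k)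
    rw [← h0]
    exact hm.monotoneOn (le_refl (0:ℝ)) h h
  have hmono : ∀ (r r' : ℝ) (k : ℕ), 0 ≤ r → r ≤ r' →
      2 ^ k * α (β r k) ≤ 2 ^ k * α (β r' k) := by
    intro r r' k h h'
    refine mul_le_mul_of_nonneg_left ?_ (by positivity)
    refine hα.2.1.monotoneOn (hb0 r k h) (hb0 r' k (h.trans h')) ?_
    exact (hβ.2.1 k (Nat.cast_nonneg k)).2.1.monotoneOn h (h.trans h' : (0:ℝ) ≤ r') h'
  have hnn : ∀ (r : ℝ) (k : ℕ), 0 ≤ r → 0 ≤ 2 ^ k * α (β r k) := fun r k h =>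
    mul_nonneg (by positivity) (kinf_nonneg hα (hb0 r k h))
  have hsum : ∀ r, 0 ≤ r → Summable fun k : ℕ => 2 ^ k * α (β r k) := by
    intro r h
    obtain ⟨N, hrN⟩ := exists_nat_ge r
    exact Summable.of_nonneg_of_le (fun k => hnn r k h) (fun k => hmono r N k h hrN) (hN N)
  refine ⟨α, fun r => r + ∑' k : ℕ, 2 ^ k * α (β r k), hα, ⟨?_, ?_, ?_, ?_⟩, hsum, ?_⟩
  · refine continuousOn_id.add ?_
    intro r₀ hr₀
    obtain ⟨N, hrN⟩ := exists_nat_gt r₀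
    have hco : ContinuousOn (fun r => ∑' k : ℕ, 2 ^ k * α (β r k)) (Set.Ico 0 (N:ℝ)) := by
      refine continuousOn_tsum (u := fun k : ℕ => 2 ^ k * α (β N k)) ?_ (hN N) ?_
      · intro k
        refine continuousOn_const.mul ?_
        refine hα.1.comp ((hβ.2.1 k (Nat.cast_nonneg k)).1.mono (fun r h => h.1)) ?_
        exact fun r h => hb0 r k h.1
      · intro k r h
        rw [Real.norm_of_nonneg (hnn r k h.1)]
        exact hmono r N k h.1 h.2.le
    refine (hco r₀ ⟨hr₀, hrN⟩).mono_of_mem_nhdsWithin ?_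
    rw [← Set.Ici_inter_Iio]
    exact inter_mem_nhdsWithin _ (Iio_mem_nhds hrN)
  · intro r h r' h' hrr
    exact add_lt_add_of_lt_of_le hrr
      ((hsum r h).tsum_le_tsum (fun k => hmono r r' k h hrr.le) (hsum r' h'))
  · have : ∀ k : ℕ, β 0 k = 0 := fun k => (hβ.2.1 k (Nat.cast_nonneg k)).2.2
    simp [this, hα.2.2.1]
  · refine tendsto_atTop_mono' atTop ?_ tendsto_id
    filter_upwards [eventually_ge_atTop 0] with r h
    have : 0 ≤ ∑' k : ℕ, 2 ^ k * α (β r k) := tsum_nonneg (fun k => hnn r k h)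
    simp only [id]
    linarith
  · intro r h
    simp only
    linarith

/-- Theorem (Converse Lyapunov result, nonlinear case): the system `x(k+1) = f(x(k), σ^k z)`
over the sofic shift `Z` is GUAS iff it admits a sequence-dependent Lyapunov function. -/
theorem guas_iff_exists_sequence_dependent_lyapunov
    {A : Type*} [Fintype A] {n : ℕ} (Z : Set (ℤ → A)) (hZ : IsSofic Z)
    (f : (Fin n → ℝ) → (ℤ → A) → Fin n → ℝ) :
    (∃ β : ℝ → ℝ → ℝ, IsKL β ∧
      ∀ (k : ℕ) (x0 : Fin n → ℝ) (z : ℤ → A), z ∈ Z →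
        ‖sol f x0 z k‖ ≤ β ‖x0‖ (k : ℝ)) ↔
    (∃ (V : (Fin n → ℝ) → (ℤ → A) → ℝ) (α₁ α₂ : ℝ → ℝ) (γ : ℝ),
      IsKInf α₁ ∧ IsKInf α₂ ∧ γ ∈ Set.Ico (0 : ℝ) 1 ∧
      (∀ (x : Fin n → ℝ) (z : ℤ → A), z ∈ Z → α₁ ‖x‖ ≤ V x z ∧ V x z ≤ α₂ ‖x‖) ∧
      (∀ (x : Fin n → ℝ) (z : ℤ → A), z ∈ Z →
        V (f x z) (shiftMap z) ≤ γ * V x z)) := by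
  constructor
  · rintro ⟨β, hβ, hsol⟩
    obtain ⟨α₁, α₂, h1, h2, hsum, hle⟩ := converse_comparison hβ
    have hnn : ∀ x z (k : ℕ), 0 ≤ 2 ^ k * α₁ ‖sol f x z k‖ := fun x z k =>
      mul_nonneg (by positivity) (kinf_nonneg h1 (norm_nonneg _))
    have hb : ∀ x z, z ∈ Z → ∀ k : ℕ,
        2 ^ k * α₁ ‖sol f x z k‖ ≤ 2 ^ k * α₁ (β ‖x‖ k) := by
      intro x z hz k
      have h := hsol k x z hz
      exact mul_le_mul_of_nonneg_left (h1.2.1.monotoneOn (norm_nonneg _ : (0:ℝ) ≤ _)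
        ((norm_nonneg _).trans h : (0:ℝ) ≤ _) h) (by positivity)
    have hS : ∀ x z, z ∈ Z → Summable fun k : ℕ => 2 ^ k * α₁ ‖sol f x z k‖ := fun x z hz =>
      Summable.of_nonneg_of_le (hnn x z) (hb x z hz) (hsum ‖x‖ (norm_nonneg x))
    refine ⟨fun x z => ∑' k : ℕ, 2 ^ k * α₁ ‖sol f x z k‖, α₁, α₂, 1 / 2, h1, h2,
      ⟨by norm_num, by norm_num⟩, ?_, ?_⟩
    · intro x z hz
      refine ⟨?_, ?_⟩
      · have := (hS x z hz).le_tsum 0 (fun k _ => hnn x z k)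
        simpa [sol] using this
      · exact ((hS x z hz).tsum_le_tsum (hb x z hz) (hsum _ (norm_nonneg x))).trans
          (hle _ (norm_nonneg x))
    · intro x z hz
      have h3 := (hS x z hz).tsum_eq_zero_add
      have h4 : ∑' k : ℕ, 2 ^ (k + 1) * α₁ ‖sol f x z (k + 1)‖ =
          2 * ∑' k : ℕ, 2 ^ k * α₁ ‖sol f (f x z) (shiftMap z) k‖ := by
        rw [← tsum_mul_left]
        refine tsum_congr (fun k => ?_)
        rw [sol_succ_shift, pow_succ]
        ring
      have h5 := hnn x z 0
      simp only
      rw [h3, h4]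
      linarith
  · rintro ⟨V, α₁, α₂, γ, h1, h2, ⟨hγ0, hγ1⟩, hV, hdec⟩
    obtain ⟨β, hβ, hle⟩ := exists_kl_of_kinf (γ := max γ (1 / 2)) h1 h2
      (lt_max_of_lt_right (by norm_num)) (max_lt hγ1 (by norm_num))
    refine ⟨β, hβ, fun k x z hz => hle k _ _ (norm_nonneg _) (norm_nonneg _) ?_⟩
    have hγ' : 0 ≤ max γ (1 / 2) := le_max_of_le_left hγ0
    have hind : ∀ k : ℕ, V (sol f x z k) (shiftMap^[k] z) ≤ (max γ (1 / 2)) ^ k * V x z := by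
      intro k
      induction k with
      | zero => simp [sol]
      | succ k ih =>
        have hzk := sofic_shift_iter hZ hz k
        have h3 := hdec (sol f x z k) _ hzk
        have h4 : 0 ≤ V (sol f x z k) (shiftMap^[k] z) :=
          (kinf_nonneg h1 (norm_nonneg _)).trans (hV _ _ hzk).1
        rw [Function.iterate_succ_apply']
        change V (f (sol f x z k) (shiftMap^[k] z)) (shiftMap (shiftMap^[k] z)) ≤ _
        calc _ ≤ γ * V (sol f x z k) (shiftMap^[k] z) := h3
          _ ≤ max γ (1 / 2) * V (sol f x z k) (shiftMap^[k] z) :=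
            mul_le_mul_of_nonneg_right (le_max_left _ _) h4
          _ ≤ max γ (1 / 2) * ((max γ (1 / 2)) ^ k * V x z) :=
            mul_le_mul_of_nonneg_left ih hγ'
          _ = _ := by ring
    calc α₁ ‖sol f x z k‖ ≤ V (sol f x z k) (shiftMap^[k] z) :=
          (hV _ _ (sofic_shift_iter hZ hz k)).1
      _ ≤ _ := hind k
      _ ≤ _ := mul_le_mul_of_nonneg_left (hV x z hz).2 (pow_nonneg hγ' k)
end

section
/- Let Z ⊆ Σ^ℤ be a sofic shift, A : Z → ℝ^{n×n}, and fix γ ∈ [0,1). The following are equivalent: (1) for every γ̃ ∈ (γ, 1), the linear system x(k+1) = A(σ^k(z)) x(k) is uniformly exponentially stable with decay rate γ̃; (2) for every γ̃ ∈ (γ, 1) there exist constants M₁, M₂ > 0 and a map Q : Z → S^n_+ into the symmetric positive definite n×n matrices such that M₁ I_n ⪯ Q(z) ⪯ M₂ I_n for all z ∈ Z, and A(z)ᵀ Q(σ(z)) A(z) ≺ γ̃² Q(z) for all z ∈ Z. -/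
open Set Filter Matrix

section Helpers

variable {A : Type*} {n : ℕ}

/-- Transition matrix. -/
def transM (Amap : (ℤ → A) → Matrix (Fin n) (Fin n) ℝ) (z : ℤ → A) :
    ℕ → Matrix (Fin n) (Fin n) ℝ
  | 0 => 1
  | k + 1 => Amap (shiftMap^[k] z) * transM Amap z k

lemma sol_eq_transM (Amap : (ℤ → A) → Matrix (Fin n) (Fin n) ℝ) (z : ℤ → A)
    (x0 : Fin n → ℝ) (k : ℕ) :
    sol (fun x w => (Amap w).mulVec x) x0 z k = (transM Amap z k) *ᵥ x0 := by
  induction k with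
  | zero => simp [sol, transM]
  | succ k ih => simp [sol, transM, ih, Matrix.mulVec_mulVec]

lemma transM_succ' (Amap : (ℤ → A) → Matrix (Fin n) (Fin n) ℝ) (z : ℤ → A) (k : ℕ) :
    transM Amap z (k + 1) = transM Amap (shiftMap z) k * Amap z := by
  induction k with
  | zero => simp [transM]
  | succ k ih =>
    rw [transM, ih, transM, Function.iterate_succ_apply, Matrix.mul_assoc]

lemma shiftMap_mem {Z : Set (ℤ → A)} (hZ : IsSofic Z) {z : ℤ → A} (hz : z ∈ Z) :
    shiftMap z ∈ Z := by
  obtain ⟨S, _, E, rfl⟩ := hZ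
  obtain ⟨s, hs⟩ := hz
  exact ⟨fun k => s (k + 1), fun k => hs (k + 1)⟩

lemma shiftMap_iter_mem {Z : Set (ℤ → A)} (hZ : IsSofic Z) {z : ℤ → A} (hz : z ∈ Z) (k : ℕ) :
    shiftMap^[k] z ∈ Z := by
  induction k with
  | zero => simpa
  | succ k ih => rw [Function.iterate_succ_apply']; exact shiftMap_mem hZ ih

lemma norm_sq_le_dot (x : Fin n → ℝ) : ‖x‖ ^ 2 ≤ x ⬝ᵥ x := by
  have h0 : 0 ≤ x ⬝ᵥ x := Finset.sum_nonneg fun i _ => mul_self_nonneg _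
  have h : ‖x‖ ≤ Real.sqrt (x ⬝ᵥ x) := by
    rw [pi_norm_le_iff_of_nonneg (Real.sqrt_nonneg _)]
    intro i
    rw [Real.norm_eq_abs]
    apply Real.abs_le_sqrt
    rw [sq]
    exact Finset.single_le_sum (f := fun i => x i * x i) (fun i _ => mul_self_nonneg _)
      (Finset.mem_univ i)
  calc ‖x‖ ^ 2 ≤ Real.sqrt (x ⬝ᵥ x) ^ 2 := by gcongr
    _ = _ := Real.sq_sqrt h0

lemma dot_le_norm_sq (x : Fin n → ℝ) : x ⬝ᵥ x ≤ n * ‖x‖ ^ 2 := by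
  have : ∀ i ∈ Finset.univ, x i * x i ≤ ‖x‖ ^ 2 := fun i _ => by
    have := norm_le_pi_norm x i
    rw [Real.norm_eq_abs] at this
    rw [← sq, ← sq_abs]
    gcongr
  simpa [dotProduct] using Finset.sum_le_card_nsmul _ _ _ this

lemma posSemidef_of_quad {P : Matrix (Fin n) (Fin n) ℝ} (h : P.IsSymm)
    (hp : ∀ x, 0 ≤ x ⬝ᵥ P *ᵥ x) : P.PosSemidef :=
  Matrix.PosSemidef.of_dotProduct_mulVec_nonneg (by simpa [Matrix.IsHermitian] using h.eq)
    (by simpa using hp)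

lemma posDef_of_quad {P : Matrix (Fin n) (Fin n) ℝ} (h : P.IsSymm)
    (hp : ∀ x, x ≠ 0 → 0 < x ⬝ᵥ P *ᵥ x) : P.PosDef :=
  Matrix.PosDef.of_dotProduct_mulVec_pos (by simpa [Matrix.IsHermitian] using h.eq)
    (by simpa using hp)

lemma gram_quad (P : Matrix (Fin n) (Fin n) ℝ) (x : Fin n → ℝ) :
    x ⬝ᵥ (Pᵀ * P) *ᵥ x = (P *ᵥ x) ⬝ᵥ (P *ᵥ x) := by
  rw [← Matrix.mulVec_mulVec, Matrix.dotProduct_mulVec, Matrix.vecMul_transpose]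

/-- Truncated Lyapunov matrix. -/
noncomputable def lyapM (Amap : (ℤ → A) → Matrix (Fin n) (Fin n) ℝ) (c : ℝ) (N : ℕ)
    (z : ℤ → A) : Matrix (Fin n) (Fin n) ℝ :=
  ∑ k ∈ Finset.range N, c ^ k • ((transM Amap z k)ᵀ * transM Amap z k)

lemma lyapM_symm (Amap : (ℤ → A) → Matrix (Fin n) (Fin n) ℝ) (c : ℝ) (N : ℕ) (z : ℤ → A) :
    (lyapM Amap c N z).IsSymm := by
  simp [lyapM, Matrix.IsSymm, Matrix.transpose_sum]

lemma lyapM_quad (Amap : (ℤ → A) → Matrix (Fin n) (Fin n) ℝ) (c : ℝ) (N : ℕ) (z : ℤ → A)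
    (x : Fin n → ℝ) :
    x ⬝ᵥ (lyapM Amap c N z) *ᵥ x =
      ∑ k ∈ Finset.range N, c ^ k * ((transM Amap z k *ᵥ x) ⬝ᵥ (transM Amap z k *ᵥ x)) := by
  simp only [lyapM, Matrix.sum_mulVec, dotProduct_sum, Matrix.smul_mulVec, dotProduct_smul,
    gram_quad, smul_eq_mul]

lemma lyapM_step (Amap : (ℤ → A) → Matrix (Fin n) (Fin n) ℝ) (c : ℝ) (N : ℕ) (z : ℤ → A) :
    lyapM Amap c N z - c • ((Amap z)ᵀ * lyapM Amap c N (shiftMap z) * Amap z) =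
      1 - c ^ N • ((transM Amap z N)ᵀ * transM Amap z N) := by
  have h : c • ((Amap z)ᵀ * lyapM Amap c N (shiftMap z) * Amap z) =
      ∑ k ∈ Finset.range N, c ^ (k+1) • ((transM Amap z (k+1))ᵀ * transM Amap z (k+1)) := by
    rw [lyapM, Matrix.mul_sum, Matrix.sum_mul, Finset.smul_sum]
    refine Finset.sum_congr rfl fun k _ => ?_
    rw [transM_succ', Matrix.transpose_mul, Matrix.mul_smul, Matrix.smul_mul, smul_smul,
      pow_succ']
    simp only [Matrix.mul_assoc]
  rw [h, lyapM, ← Finset.sum_sub_distrib,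
    Finset.sum_range_sub' (fun k => c ^ k • ((transM Amap z k)ᵀ * transM Amap z k))]
  simp [transM]

end Helpers

/-- Theorem (Converse Lyapunov result, linear case): for a fixed `γ ∈ [0,1)`, the linear
system `x(k+1) = A(σ^k z) x(k)` over the sofic shift `Z` is UES with every decay rate
`γ̃ ∈ (γ,1)` iff for every `γ̃ ∈ (γ,1)` there is a uniformly bounded sequence-dependent
quadratic Lyapunov certificate `Q : Z → S^n₊`. -/
theorem linear_ues_iff_exists_quadratic_sequence_dependent_lyapunov
    {A : Type*} [Fintype A] {n : ℕ} (Z : Set (ℤ → A)) (hZ : IsSofic Z)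
    (Amap : (ℤ → A) → Matrix (Fin n) (Fin n) ℝ) (γ : ℝ) (hγ : γ ∈ Set.Ico (0 : ℝ) 1) :
    (∀ γt ∈ Set.Ioo γ 1, ∃ M : ℝ, 0 < M ∧
      ∀ (k : ℕ) (x0 : Fin n → ℝ) (z : ℤ → A), z ∈ Z →
        ‖sol (fun x w => (Amap w).mulVec x) x0 z k‖ ≤ M * γt ^ k * ‖x0‖) ↔
    (∀ γt ∈ Set.Ioo γ 1, ∃ M₁ M₂ : ℝ, 0 < M₁ ∧ 0 < M₂ ∧
      ∃ Q : (ℤ → A) → Matrix (Fin n) (Fin n) ℝ,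
        (∀ z ∈ Z, (Q z - M₁ • (1 : Matrix (Fin n) (Fin n) ℝ)).PosSemidef ∧
            (M₂ • (1 : Matrix (Fin n) (Fin n) ℝ) - Q z).PosSemidef) ∧
        (∀ z ∈ Z, (γt ^ 2 • Q z - (Amap z)ᵀ * Q (shiftMap z) * Amap z).PosDef)) := by
  constructor
  · intro H γt hγt
    obtain ⟨g, hg1, hg2⟩ := exists_between hγt.1
    have hg0 : 0 < g := lt_of_le_of_lt hγ.1 hg1
    have ht0 : 0 < γt := hg0.trans hg2
    obtain ⟨M, hM, hb⟩ := H g ⟨hg1, hg2.trans hγt.2⟩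
    simp only [sol_eq_transM] at hb
    -- bound in the quadratic form
    have hq : ∀ k, ∀ z ∈ Z, ∀ x : Fin n → ℝ,
        (transM Amap z k *ᵥ x) ⬝ᵥ (transM Amap z k *ᵥ x) ≤
          (n * M ^ 2) * (g ^ 2) ^ k * (x ⬝ᵥ x) := by
      intro k z hz x
      calc _ ≤ n * ‖transM Amap z k *ᵥ x‖ ^ 2 := dot_le_norm_sq _
        _ ≤ n * (M * g ^ k * ‖x‖) ^ 2 := by gcongr; exact hb k x z hz
        _ = (n * M ^ 2) * (g ^ 2) ^ k * ‖x‖ ^ 2 := by ring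
        _ ≤ _ := by gcongr; exact norm_sq_le_dot x
    set c : ℝ := (γt ^ 2)⁻¹ with hc
    have hc0 : 0 < c := by positivity
    have hcg : c * g ^ 2 < 1 := by
      rw [hc, inv_mul_lt_one₀ (by positivity)]
      gcongr
    obtain ⟨N, hN⟩ : ∃ N : ℕ, (n * M ^ 2) * (c * g ^ 2) ^ N < 1 := by
      have h1 := (tendsto_pow_atTop_nhds_zero_of_lt_one (by positivity) hcg).const_mul
        (n * M ^ 2)
      rw [mul_zero] at h1
      exact (h1.eventually_lt_const one_pos).exists
    -- use `N + 1` terms to guarantee the lower bound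
    have hN' : (n * M ^ 2) * (c * g ^ 2) ^ (N + 1) < 1 := by
      refine lt_of_le_of_lt ?_ hN
      gcongr _ * ?_
      exact pow_le_pow_of_le_one (by positivity) hcg.le (Nat.le_succ N)
    refine ⟨1, 1 + ∑ k ∈ Finset.range (N + 1), c ^ k * ((n * M ^ 2) * (g ^ 2) ^ k), one_pos,
      by positivity, lyapM Amap c (N + 1), fun z hz => ⟨?_, ?_⟩, fun z hz => ?_⟩
    · refine posSemidef_of_quad ((lyapM_symm ..).sub (by simp [Matrix.IsSymm])) fun x => ?_
      rw [Matrix.sub_mulVec, dotProduct_sub, lyapM_quad, Finset.sum_range_succ']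
      have : 0 ≤ ∑ k ∈ Finset.range N, c ^ (k + 1) *
          ((transM Amap z (k + 1) *ᵥ x) ⬝ᵥ (transM Amap z (k + 1) *ᵥ x)) :=
        Finset.sum_nonneg fun k _ => mul_nonneg (by positivity)
          ((sq_nonneg _).trans (norm_sq_le_dot _))
      simpa [transM] using this
    · refine posSemidef_of_quad (Matrix.IsSymm.sub (by simp [Matrix.IsSymm]) (lyapM_symm ..))
        fun x => ?_
      have hx : 0 ≤ x ⬝ᵥ x := (sq_nonneg _).trans (norm_sq_le_dot _)
      rw [Matrix.sub_mulVec, dotProduct_sub, lyapM_quad, Matrix.smul_mulVec, Matrix.one_mulVec,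
        dotProduct_smul, smul_eq_mul, add_mul, one_mul, Finset.sum_mul]
      have : ∑ k ∈ Finset.range (N + 1), c ^ k *
          ((transM Amap z k *ᵥ x) ⬝ᵥ (transM Amap z k *ᵥ x)) ≤
          ∑ k ∈ Finset.range (N + 1), c ^ k * ((n * M ^ 2) * (g ^ 2) ^ k) * (x ⬝ᵥ x) := by
        refine Finset.sum_le_sum fun k _ => ?_
        rw [mul_assoc (c ^ k)]
        gcongr
        exact hq k z hz x
      linarith
    · have e : γt ^ 2 • lyapM Amap c (N + 1) z -
          (Amap z)ᵀ * lyapM Amap c (N + 1) (shiftMap z) * Amap z =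
          γt ^ 2 • (1 - c ^ (N + 1) • ((transM Amap z (N + 1))ᵀ * transM Amap z (N + 1))) := by
        rw [← lyapM_step, smul_sub, smul_smul, hc, mul_inv_cancel₀ (by positivity), one_smul]
      rw [e]
      refine posDef_of_quad (by simp [Matrix.IsSymm]) fun x hx => ?_
      have hx : 0 < x ⬝ᵥ x := lt_of_lt_of_le (by positivity) (norm_sq_le_dot x)
      rw [Matrix.smul_mulVec, dotProduct_smul, smul_eq_mul, Matrix.sub_mulVec, dotProduct_sub,
        Matrix.smul_mulVec, dotProduct_smul, smul_eq_mul, gram_quad, Matrix.one_mulVec]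
      refine mul_pos (by positivity) (sub_pos.2 ?_)
      calc _ ≤ c ^ (N + 1) * ((n * M ^ 2) * (g ^ 2) ^ (N + 1) * (x ⬝ᵥ x)) := by
            gcongr; exact hq _ z hz x
        _ = ((n * M ^ 2) * (c * g ^ 2) ^ (N + 1)) * (x ⬝ᵥ x) := by rw [mul_pow]; ring
        _ < 1 * (x ⬝ᵥ x) := by gcongr
        _ = _ := one_mul _
  · intro H γt hγt
    have ht0 : 0 < γt := lt_of_le_of_lt hγ.1 hγt.1
    obtain ⟨M₁, M₂, h1, h2, Q, hQ, hL⟩ := H γt hγt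
    refine ⟨Real.sqrt (M₂ * (n + 1) / M₁), by positivity, fun k x0 z hz => ?_⟩
    set X := sol (fun x w => (Amap w).mulVec x) x0 z with hX
    have hlow : ∀ w ∈ Z, ∀ x, M₁ * (x ⬝ᵥ x) ≤ x ⬝ᵥ Q w *ᵥ x := fun w hw x => by
      have := (hQ w hw).1.dotProduct_mulVec_nonneg x
      simpa [Matrix.sub_mulVec, dotProduct_sub, Matrix.smul_mulVec] using this
    have hup : ∀ w ∈ Z, ∀ x, x ⬝ᵥ Q w *ᵥ x ≤ M₂ * (x ⬝ᵥ x) := fun w hw x => by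
      have := (hQ w hw).2.dotProduct_mulVec_nonneg x
      simpa [Matrix.sub_mulVec, dotProduct_sub, Matrix.smul_mulVec] using this
    have hstep : ∀ w ∈ Z, ∀ x, (Amap w *ᵥ x) ⬝ᵥ Q (shiftMap w) *ᵥ (Amap w *ᵥ x) ≤
        γt ^ 2 * (x ⬝ᵥ Q w *ᵥ x) := fun w hw x => by
      have h := (hL w hw).posSemidef.dotProduct_mulVec_nonneg x
      have e : x ⬝ᵥ ((Amap w)ᵀ * Q (shiftMap w) * Amap w) *ᵥ x =
          (Amap w *ᵥ x) ⬝ᵥ Q (shiftMap w) *ᵥ (Amap w *ᵥ x) := by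
        rw [← Matrix.mulVec_mulVec, ← Matrix.mulVec_mulVec, Matrix.dotProduct_mulVec x,
          Matrix.vecMul_transpose]
      rw [← e]
      simpa [Matrix.sub_mulVec, dotProduct_sub, Matrix.smul_mulVec] using h
    have hV : ∀ k, X k ⬝ᵥ Q (shiftMap^[k] z) *ᵥ X k ≤ (γt ^ 2) ^ k * (x0 ⬝ᵥ Q z *ᵥ x0) := by
      intro k
      induction k with
      | zero => simp [hX, sol]
      | succ k ih =>
        have hs := hstep _ (shiftMap_iter_mem hZ hz k) (X k)
        rw [Function.iterate_succ_apply']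
        calc _ ≤ γt ^ 2 * (X k ⬝ᵥ Q (shiftMap^[k] z) *ᵥ X k) := hs
          _ ≤ γt ^ 2 * ((γt ^ 2) ^ k * (x0 ⬝ᵥ Q z *ᵥ x0)) := by gcongr
          _ = _ := by ring
    have key : M₁ * ‖X k‖ ^ 2 ≤ M₂ * (n + 1) * (γt ^ k * ‖x0‖) ^ 2 := by
      calc M₁ * ‖X k‖ ^ 2 ≤ M₁ * (X k ⬝ᵥ X k) := by gcongr; exact norm_sq_le_dot _
        _ ≤ _ := hlow _ (shiftMap_iter_mem hZ hz k) _
        _ ≤ _ := hV k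
        _ ≤ (γt ^ 2) ^ k * (M₂ * (x0 ⬝ᵥ x0)) := by gcongr; exact hup z hz x0
        _ ≤ (γt ^ 2) ^ k * (M₂ * ((n + 1) * ‖x0‖ ^ 2)) := by
            gcongr
            nlinarith [dot_le_norm_sq x0, sq_nonneg ‖x0‖]
        _ = _ := by ring
    refine (sq_le_sq₀ (norm_nonneg _) (by positivity)).1 ?_
    rw [mul_assoc, mul_pow, Real.sq_sqrt (by positivity), div_mul_eq_mul_div, le_div_iff₀ h1]
    linarith
end

section
/- Let C = {C_1, …, C_K} be a g-covering of a sofic shift Z with presentation G, let f : ℝ^n × Z → ℝ^n, and let W : ℝ^n × C → ℝ be a G-based Lyapunov function for the system x(k+1) = f(x(k), σ^k(z)), with class-K∞ bounds α₁, α₂ and rate γ ∈ [0,1). Then the function V_min : ℝ^n × Z → ℝ defined by V_min(x, z) := min{ W(x, X) : X ∈ C, z ∈ X } is a sequence-dependent Lyapunov function for the system, i.e. α₁(|x|) ≤ V_min(x, z) ≤ α₂(|x|) for all x, z, and V_min(f(x,z), σ(z)) ≤ γ V_min(x, z) for all x ∈ ℝ^n and z ∈ Z. -/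
open Set Filter Matrix

/-- Theorem: if `W` is a `G`-based Lyapunov function for the system `x(k+1) = f(x(k), σ^k z)`
(with g-covering `C` presented by the graph with edge set `E`), then
`V_min(x, z) = min { W(x, X) : X ∈ C, z ∈ X }` is a sequence-dependent Lyapunov function. -/
theorem gBased_lyapunov_min_is_sequence_dependent_lyapunov
    {A : Type*} [Fintype A] {n K : ℕ} (Z : Set (ℤ → A))
    (C : Fin K → Set (ℤ → A)) (E : Set (Fin K × Fin K × A))
    (hpres : IsPresentation E C Z)
    (f : (Fin n → ℝ) → (ℤ → A) → Fin n → ℝ)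
    (W : (Fin n → ℝ) → Fin K → ℝ) (α₁ α₂ : ℝ → ℝ) (γ : ℝ)
    (hα₁ : IsKInf α₁) (hα₂ : IsKInf α₂) (hγ : γ ∈ Set.Ico (0 : ℝ) 1)
    (hbd : ∀ (x : Fin n → ℝ) (j : Fin K), α₁ ‖x‖ ≤ W x j ∧ W x j ≤ α₂ ‖x‖)
    (hdec : ∀ (x : Fin n → ℝ) (j j' : Fin K) (i : A) (z : ℤ → A),
      (j, j', i) ∈ E → z ∈ C j → z 0 = i → shiftMap z ∈ C j' →
      W (f x z) j' ≤ γ * W x j) :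
    (∀ (x : Fin n → ℝ) (z : ℤ → A), z ∈ Z →
      α₁ ‖x‖ ≤ sInf {r : ℝ | ∃ j : Fin K, z ∈ C j ∧ r = W x j} ∧
      sInf {r : ℝ | ∃ j : Fin K, z ∈ C j ∧ r = W x j} ≤ α₂ ‖x‖) ∧
    (∀ (x : Fin n → ℝ) (z : ℤ → A), z ∈ Z →
      sInf {r : ℝ | ∃ j : Fin K, shiftMap z ∈ C j ∧ r = W (f x z) j} ≤
        γ * sInf {r : ℝ | ∃ j : Fin K, z ∈ C j ∧ r = W x j}) := by
  obtain ⟨hZ, hC⟩ := hpres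
  have hne : ∀ (x : Fin n → ℝ) (z : ℤ → A), z ∈ Z →
      {r : ℝ | ∃ j : Fin K, z ∈ C j ∧ r = W x j}.Nonempty := by
    intro x z hz
    rw [hZ] at hz
    obtain ⟨s, hs⟩ := hz
    refine ⟨W x (s 0), s 0, ?_, rfl⟩
    rw [hC]
    exact ⟨s, hs, rfl⟩
  have hbb : ∀ (x : Fin n → ℝ) (z : ℤ → A),
      BddBelow {r : ℝ | ∃ j : Fin K, z ∈ C j ∧ r = W x j} := by
    intro x z
    refine ⟨α₁ ‖x‖, ?_⟩
    rintro r ⟨j, -, rfl⟩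
    exact (hbd x j).1
  have hfin : ∀ (x : Fin n → ℝ) (z : ℤ → A),
      {r : ℝ | ∃ j : Fin K, z ∈ C j ∧ r = W x j}.Finite := by
    intro x z
    refine (Set.finite_range (W x)).subset ?_
    rintro r ⟨j, -, rfl⟩
    exact ⟨j, rfl⟩
  refine ⟨fun x z hz => ?_, fun x z hz => ?_⟩
  · obtain ⟨j, -, hj⟩ := (hne x z hz).csInf_mem (hfin x z)
    rw [hj]
    exact hbd x j
  · obtain ⟨j, hzj, hj⟩ := (hne x z hz).csInf_mem (hfin x z)
    rw [hj]
    have hzj' := hzj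
    rw [hC] at hzj'
    obtain ⟨s, hs, h0⟩ := hzj'
    have hsh : shiftMap z ∈ C (s 1) := by
      rw [hC]
      exact ⟨fun k => s (k + 1), fun k => hs (k + 1), by simp⟩
    have hE : (j, s 1, z 0) ∈ E := by
      have h := hs 0
      rw [h0] at h
      simpa using h
    exact (csInf_le (hbb (f x z) (shiftMap z)) ⟨s 1, hsh, rfl⟩).trans
      (hdec x j (s 1) (z 0) z hE hzj rfl hsh)
end

section
/- Let C = {C_1, …, C_K} be a g-covering of a sofic shift Z with presentation G, let f : ℝ^n × Z → ℝ^n, and let W : ℝ^n × C → ℝ be a G-based Lyapunov function for the system x(k+1) = f(x(k), σ^k(z)), with class-K∞ bounds α₁, α₂ and rate γ ∈ [0,1). Then the function V_max : ℝ^n × Z → ℝ defined by V_max(x, z) := max{ W(x, X) : X ∈ C, z ∈ X } is a sequence-dependent Lyapunov function for the system, i.e. α₁(|x|) ≤ V_max(x, z) ≤ α₂(|x|) for all x, z, and V_max(f(x,z), σ(z)) ≤ γ V_max(x, z) for all x ∈ ℝ^n and z ∈ Z. -/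
open Set Filter Matrix

/-- Theorem: if `W` is a `G`-based Lyapunov function for the system `x(k+1) = f(x(k), σ^k z)`
(with g-covering `C` presented by the graph with edge set `E`), then
`V_max(x, z) = max { W(x, X) : X ∈ C, z ∈ X }` is a sequence-dependent Lyapunov function. -/
theorem gBased_lyapunov_max_is_sequence_dependent_lyapunov
    {A : Type*} [Fintype A] {n K : ℕ} (Z : Set (ℤ → A))
    (C : Fin K → Set (ℤ → A)) (E : Set (Fin K × Fin K × A))
    (hpres : IsPresentation E C Z)
    (f : (Fin n → ℝ) → (ℤ → A) → Fin n → ℝ)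
    (W : (Fin n → ℝ) → Fin K → ℝ) (α₁ α₂ : ℝ → ℝ) (γ : ℝ)
    (hα₁ : IsKInf α₁) (hα₂ : IsKInf α₂) (hγ : γ ∈ Set.Ico (0 : ℝ) 1)
    (hbd : ∀ (x : Fin n → ℝ) (j : Fin K), α₁ ‖x‖ ≤ W x j ∧ W x j ≤ α₂ ‖x‖)
    (hdec : ∀ (x : Fin n → ℝ) (j j' : Fin K) (i : A) (z : ℤ → A),
      (j, j', i) ∈ E → z ∈ C j → z 0 = i → shiftMap z ∈ C j' →
      W (f x z) j' ≤ γ * W x j) :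
    (∀ (x : Fin n → ℝ) (z : ℤ → A), z ∈ Z →
      α₁ ‖x‖ ≤ sSup {r : ℝ | ∃ j : Fin K, z ∈ C j ∧ r = W x j} ∧
      sSup {r : ℝ | ∃ j : Fin K, z ∈ C j ∧ r = W x j} ≤ α₂ ‖x‖) ∧
    (∀ (x : Fin n → ℝ) (z : ℤ → A), z ∈ Z →
      sSup {r : ℝ | ∃ j : Fin K, shiftMap z ∈ C j ∧ r = W (f x z) j} ≤
        γ * sSup {r : ℝ | ∃ j : Fin K, z ∈ C j ∧ r = W x j}) := by
  have hbdd : ∀ (x : Fin n → ℝ) (z : ℤ → A),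
      BddAbove {r : ℝ | ∃ j : Fin K, z ∈ C j ∧ r = W x j} := by
    rintro x z
    refine ⟨α₂ ‖x‖, ?_⟩
    rintro r ⟨j, _, rfl⟩
    exact (hbd x j).2
  obtain ⟨hZ, hC⟩ := hpres
  have hcov : ∀ z ∈ Z, ∃ j, z ∈ C j := by
    intro z hz
    rw [hZ] at hz
    obtain ⟨s, hs⟩ := hz
    exact ⟨s 0, by rw [hC]; exact ⟨s, hs, rfl⟩⟩
  have hshift : ∀ z ∈ Z, ∃ j, shiftMap z ∈ C j := by
    intro z hz
    rw [hZ] at hz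
    obtain ⟨s, hs⟩ := hz
    exact ⟨s (0 + 1), by rw [hC]; exact ⟨fun k => s (k + 1), fun k => hs (k + 1), rfl⟩⟩
  refine ⟨fun x z hz => ?_, fun x z hz => ?_⟩
  · obtain ⟨j, hj⟩ := hcov z hz
    refine ⟨(hbd x j).1.trans (le_csSup (hbdd x z) ⟨j, hj, rfl⟩), ?_⟩
    refine csSup_le ⟨_, j, hj, rfl⟩ ?_
    rintro r ⟨j', _, rfl⟩
    exact (hbd x j').2
  · obtain ⟨j, hj⟩ := hshift z hz
    refine csSup_le ⟨_, j, hj, rfl⟩ ?_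
    rintro r ⟨j', hj', rfl⟩
    have hmem := hj'
    rw [hC] at hmem
    obtain ⟨s, hs, hs0⟩ := hmem
    have hw : IsLabeledWalk E z (fun k => s (k - 1)) := by
      intro k
      have h := hs (k - 1)
      simp only [shiftMap, sub_add_cancel] at h
      simpa using h
    have hz' : z ∈ C (s (0 - 1)) := by
      rw [hC]
      exact ⟨_, hw, rfl⟩
    have he : (s (0 - 1), j', z 0) ∈ E := by
      have h := hw 0
      simpa [hs0] using h
    exact (hdec x _ j' (z 0) z he hz' rfl hj').trans
      (mul_le_mul_of_nonneg_left (le_csSup (hbdd x z) ⟨_, hz', rfl⟩) hγ.1)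
end
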